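/- arXiv:1811.07989 — 4 statements merged into one kernel-verified Lean document; each statement's English description precedes it below -/
import Mathlib

section
/- For every ε > 0 there exists a constant C > 0 such that for every integer k ≥ 3 there is a positive integer t with t ≤ C · k^(5/2+ε) having the following property: for every positive integer n, every equinumerous t-coloring of [t·n] contains a rainbow arithmetic progression of length k. (Equivalently, T_k = O(k^(5/2+ε)) for all ε > 0.) -/
/-- `c` is an equinumerous `t`-coloring of `[t*n] = {1, ..., t*n}`:
each color class `c⁻¹(i)` for `i ∈ {1, ..., t}` has exactly `n` elements. -/
def EquinumerousColoring (t n : ℕ) (c : ℕ → ℕ) : Prop :=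
  ∀ i, 1 ≤ i → i ≤ t → ((Finset.Icc 1 (t * n)).filter (fun x => c x = i)).card = n

/-- The arithmetic progression with first term `a`, common difference `d` and
length `k` is rainbow with respect to the coloring `c`. -/
def RainbowAP (k : ℕ) (c : ℕ → ℕ) (a d : ℕ) : Prop :=
  ∀ i < k, ∀ j < k, c (a + i * d) = c (a + j * d) → i = j

open Finset in
lemma divisor_moment (K j : ℕ) :
    ∑ N ∈ Icc 1 K, ((N.divisors.card : ℝ) ^ j / N) ≤ (∑ N ∈ Icc 1 K, (1 / N : ℝ)) ^ (2 ^ j) := by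
  induction j with
  | zero => simp
  | succ j ih =>
    have hnn : 0 ≤ ∑ N ∈ Icc 1 K, ((N.divisors.card : ℝ) ^ j / N) :=
      Finset.sum_nonneg (fun i _ => by positivity)
    have h1 : ∑ N ∈ Icc 1 K, ((N.divisors.card : ℝ) ^ (j + 1) / N) ≤
        (∑ N ∈ Icc 1 K, ((N.divisors.card : ℝ) ^ j / N)) ^ 2 := by
      rw [sq, Finset.sum_mul_sum, ← Finset.sum_product']
      have hm : ∀ p ∈ (Icc 1 K ×ˢ Icc 1 K).filter (fun p : ℕ × ℕ => p.1 * p.2 ∈ Icc 1 K),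
          p.1 * p.2 ∈ Icc 1 K := fun p hp => (Finset.mem_filter.1 hp).2
      calc _ ≤ ∑ p ∈ (Icc 1 K ×ˢ Icc 1 K).filter (fun p : ℕ × ℕ => p.1 * p.2 ∈ Icc 1 K),
            ((p.1.divisors.card : ℝ) ^ j / p.1 * ((p.2.divisors.card : ℝ) ^ j / p.2)) := by
            rw [← Finset.sum_fiberwise_of_maps_to hm]
            apply Finset.sum_le_sum
            intro N hN
            have hN' := Finset.mem_Icc.1 hN
            have hfib : ((Icc 1 K ×ˢ Icc 1 K).filter
                (fun p : ℕ × ℕ => p.1 * p.2 ∈ Icc 1 K)).filter (fun p => p.1 * p.2 = N)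
                = N.divisorsAntidiagonal := by
              ext ⟨a, b⟩
              simp only [Finset.mem_filter, Finset.mem_product, Finset.mem_Icc,
                Nat.mem_divisorsAntidiagonal]
              constructor
              · rintro ⟨_, h⟩
                exact ⟨h, by omega⟩
              · rintro ⟨h, _⟩
                have ha : 0 < a := Nat.pos_of_ne_zero (by rintro rfl; simp at h; omega)
                have hb : 0 < b := Nat.pos_of_ne_zero (by rintro rfl; simp at h; omega)
                have := Nat.le_mul_of_pos_right a hb
                have := Nat.le_mul_of_pos_left b ha
                refine ⟨⟨⟨⟨?_, ?_⟩, ?_, ?_⟩, ?_, ?_⟩, h⟩ <;> omega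
            rw [hfib]
            have hc : (N.divisors.card : ℝ) ^ (j + 1) / N =
                ∑ p ∈ N.divisorsAntidiagonal, ((N.divisors.card : ℝ) ^ j / N) := by
              rw [Finset.sum_const, nsmul_eq_mul, ← Nat.map_div_right_divisors, Finset.card_map]
              ring
            rw [hc]
            apply Finset.sum_le_sum
            rintro ⟨a, b⟩ hp
            have hab := (Nat.mem_divisorsAntidiagonal.1 hp).1
            simp only at hab ⊢
            rw [div_mul_div_comm, ← mul_pow, ← hab, Nat.cast_mul]
            gcongr
            rw [Nat.divisors_mul]
            exact_mod_cast Finset.card_mul_le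
        _ ≤ _ := Finset.sum_le_sum_of_subset_of_nonneg (Finset.filter_subset _ _)
            (fun i _ _ => by positivity)
    calc _ ≤ _ := h1
      _ ≤ ((∑ N ∈ Icc 1 K, (1 / N : ℝ)) ^ (2 ^ j)) ^ 2 := by gcongr
      _ = _ := by rw [← pow_mul, pow_succ]

/-- Number of divisors of `D` which are at most `k`. -/
def smallDivs (k D : ℕ) : Finset ℕ := (Finset.Icc 1 k).filter (fun m => m ∣ D)

open Finset in
lemma smallDivs_moment (k X q : ℕ) :
    ∑ D ∈ Icc 1 X, ((smallDivs k D).card : ℝ) ^ q ≤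
      X * ∑ N ∈ Icc 1 (k ^ q), ((N.divisors.card : ℝ) ^ q / N) := by
  set P : Finset (Fin q → ℕ) := Fintype.piFinset (fun _ => Icc 1 k) with hP
  have hL : ∀ f ∈ P, univ.lcm f ∈ Icc 1 (k ^ q) := by
    intro f hf
    have hf' : ∀ i, 1 ≤ f i ∧ f i ≤ k := fun i => Finset.mem_Icc.1 (Fintype.mem_piFinset.1 hf i)
    have hpos : 0 < ∏ i, f i := Finset.prod_pos (fun i _ => (hf' i).1)
    have hdvd : univ.lcm f ∣ ∏ i, f i :=
      Finset.lcm_dvd (fun i hi => Finset.dvd_prod_of_mem f hi)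
    have hle : ∏ i, f i ≤ k ^ q := by
      calc _ ≤ ∏ _i : Fin q, k := Finset.prod_le_prod' (fun i _ => (hf' i).2)
        _ = _ := by simp
    exact Finset.mem_Icc.2 ⟨Nat.pos_of_dvd_of_pos hdvd hpos, (Nat.le_of_dvd hpos hdvd).trans hle⟩
  have h1 : ∀ D, ((smallDivs k D).card : ℝ) ^ q =
      ∑ f ∈ P, if univ.lcm f ∣ D then (1 : ℝ) else 0 := by
    intro D
    rw [Finset.sum_boole]
    have : P.filter (fun f => univ.lcm f ∣ D) = Fintype.piFinset (fun _ => smallDivs k D) := by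
      ext f
      simp [hP, smallDivs, Finset.lcm_dvd_iff, Fintype.mem_piFinset, forall_and]
    rw [this, Fintype.card_piFinset]
    simp
  simp_rw [h1]
  rw [Finset.sum_comm, Finset.mul_sum, ← Finset.sum_fiberwise_of_maps_to hL]
  apply Finset.sum_le_sum
  intro N hN
  have hN' := Finset.mem_Icc.1 hN
  have hNpos : (0 : ℝ) < N := by exact_mod_cast hN'.1
  have h2 : ∀ f ∈ P.filter (fun f => univ.lcm f = N),
      (∑ D ∈ Icc 1 X, if univ.lcm f ∣ D then (1 : ℝ) else 0) ≤ X / N := by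
    intro f hf
    rw [(Finset.mem_filter.1 hf).2, Finset.sum_boole]
    have : ((Icc 1 X).filter (fun D => N ∣ D)).card = X / N := by
      have := Nat.Ioc_filter_dvd_card_eq_div X N
      rw [← this]
      congr 1
    rw [this]
    exact Nat.cast_div_le
  refine (Finset.sum_le_sum h2).trans ?_
  rw [Finset.sum_const, nsmul_eq_mul]
  have hcard : (P.filter (fun f => univ.lcm f = N)).card ≤ N.divisors.card ^ q := by
    calc _ ≤ (Fintype.piFinset (fun _ : Fin q => N.divisors)).card := by
          apply Finset.card_le_card
          intro f hf
          rw [Fintype.mem_piFinset]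
          intro i
          rw [Nat.mem_divisors]
          refine ⟨?_, by omega⟩
          rw [← (Finset.mem_filter.1 hf).2]
          exact Finset.dvd_lcm (Finset.mem_univ i)
      _ = _ := by rw [Fintype.card_piFinset]; simp
  have hcard' : ((P.filter (fun f => univ.lcm f = N)).card : ℝ) ≤ (N.divisors.card : ℝ) ^ q := by
    exact_mod_cast hcard
  calc _ ≤ (N.divisors.card : ℝ) ^ q * (X / N) := by gcongr
    _ = _ := by ring

open Finset in
lemma moment_bound (k : ℕ) (hk : 1 ≤ k) :
    ∑ N ∈ Icc 1 (k ^ 6), ((N.divisors.card : ℝ) ^ 6 / N) ≤ 769 ^ 64 * (k : ℝ) ^ ((1 : ℝ) / 2) := by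
  refine (divisor_moment (k ^ 6) 6).trans ?_
  have hk' : (1 : ℝ) ≤ k := by exact_mod_cast hk
  have h1 : ∑ N ∈ Icc 1 (k ^ 6), (1 / N : ℝ) ≤ 1 + Real.log ((k ^ 6 : ℕ) : ℝ) := by
    have := harmonic_le_one_add_log (k ^ 6)
    rw [harmonic_eq_sum_Icc] at this
    push_cast at this ⊢
    simpa using this
  have h2 : Real.log (k : ℝ) ≤ (k : ℝ) ^ ((1 : ℝ) / 128) / (1 / 128) :=
    Real.log_le_rpow_div (by positivity) (by norm_num)
  have h3 : (1 : ℝ) ≤ (k : ℝ) ^ ((1 : ℝ) / 128) := Real.one_le_rpow hk' (by norm_num)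
  have h4 : ∑ N ∈ Icc 1 (k ^ 6), (1 / N : ℝ) ≤ 769 * (k : ℝ) ^ ((1 : ℝ) / 128) := by
    refine h1.trans ?_
    rw [Nat.cast_pow, Real.log_pow]
    push_cast
    linarith
  have h0 : 0 ≤ ∑ N ∈ Icc 1 (k ^ 6), (1 / N : ℝ) := Finset.sum_nonneg (fun i _ => by positivity)
  calc _ ≤ (769 * (k : ℝ) ^ ((1 : ℝ) / 128)) ^ (2 ^ 6) := by gcongr
    _ = 769 ^ 64 * ((k : ℝ) ^ ((1 : ℝ) / 128)) ^ 64 := by rw [mul_pow]; norm_num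
    _ = _ := by
      rw [← Real.rpow_natCast ((k : ℝ) ^ ((1 : ℝ) / 128)), ← Real.rpow_mul (by positivity)]
      norm_num

/-- Elements of `[M]` larger than `x` with the same colour. -/
def laterSame (c : ℕ → ℕ) (M x : ℕ) : Finset ℕ :=
  (Finset.Icc 1 M).filter (fun y => c y = c x ∧ x < y)

open Finset in
lemma count_APs (k s n : ℕ) (hk : 1 ≤ k) (c : ℕ → ℕ)
    (hno : ∀ a d : ℕ, 1 ≤ a → 1 ≤ d → a + (k - 1) * d ≤ 2 * k * s * n → ¬ RainbowAP k c a d) :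
    (k * s * n) * (s * n) ≤ ∑ x ∈ Icc 1 (2 * k * s * n),
      ∑ y ∈ laterSame c (2 * k * s * n) x, k * (smallDivs k (y - x)).card := by
  set M := 2 * k * s * n with hM
  set Q : Finset (Σ _ : ℕ, Σ _ : ℕ, ℕ × ℕ) := (Icc 1 M).sigma
    (fun x => (laterSame c M x).sigma (fun y => range k ×ˢ smallDivs k (y - x))) with hQ
  have hQc : Q.card = ∑ x ∈ Icc 1 M,
      ∑ y ∈ laterSame c M x, k * (smallDivs k (y - x)).card := by
    simp [hQ, Finset.card_sigma]
  rw [← hQc]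
  have hA : (k * s * n) * (s * n) = (Icc 1 (k * s * n) ×ˢ Icc 1 (s * n)).card := by simp
  rw [hA]
  apply Finset.card_le_card_of_surjOn
    (fun z => (z.1 - z.2.2.1 * ((z.2.1 - z.1) / z.2.2.2), (z.2.1 - z.1) / z.2.2.2))
  rintro ⟨a, d⟩ had
  simp only [Finset.coe_product, Set.mem_prod, Finset.mem_coe, Finset.mem_Icc] at had
  obtain ⟨⟨ha1, ha2⟩, hd1, hd2⟩ := had
  have hbound : a + (k - 1) * d ≤ M := by
    have h1 : (k - 1) * d ≤ k * (s * n) := Nat.mul_le_mul (by omega) hd2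
    have h2 : M = k * s * n + k * (s * n) := by rw [hM]; ring
    omega
  have hr := hno a d ha1 hd1 hbound
  have key : ∃ i j, i < j ∧ j < k ∧ c (a + j * d) = c (a + i * d) := by
    unfold RainbowAP at hr
    push Not at hr
    obtain ⟨i, hi, j, hj, hc, hne⟩ := hr
    rcases lt_or_gt_of_ne hne with h | h
    · exact ⟨i, j, h, hj, hc.symm⟩
    · exact ⟨j, i, h, hi, hc⟩
  obtain ⟨i, j, hij, hj, hc⟩ := key
  obtain ⟨m, rfl⟩ := Nat.exists_eq_add_of_lt hij
  have hjd : (i + m + 1) * d ≤ (k - 1) * d := Nat.mul_le_mul_right d (by omega)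
  have hexp : (i + m + 1) * d = i * d + (m + 1) * d := by ring
  have hmd : 0 < (m + 1) * d := by positivity
  have hsub : a + (i + m + 1) * d - (a + i * d) = (m + 1) * d := by omega
  refine ⟨⟨a + i * d, a + (i + m + 1) * d, i, m + 1⟩, ?_, ?_⟩
  · simp only [hQ, Finset.mem_coe, Finset.mem_sigma, Finset.mem_Icc, laterSame,
      Finset.mem_filter, Finset.mem_product, Finset.mem_range, smallDivs, hsub]
    refine ⟨⟨by omega, by omega⟩, ⟨⟨by omega, by omega⟩, hc, by omega⟩, by omega,
      ⟨by omega, by omega⟩, Dvd.intro _ rfl⟩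
  · simp only [hsub]
    rw [Nat.mul_div_cancel_left d (Nat.succ_pos m)]
    simp

open Finset in
lemma color_class (t n : ℕ) (c : ℕ → ℕ) (hc : EquinumerousColoring t n c) (x : ℕ)
    (hx : x ∈ Icc 1 (t * n)) : ((Icc 1 (t * n)).filter (fun y => c y = c x)).card = n := by
  apply hc
  all_goals
    have hU : ((Icc 1 (t * n)).filter (fun y => c y ∈ Icc 1 t)) = Icc 1 (t * n) := by
      apply Finset.eq_of_subset_of_card_le (Finset.filter_subset _ _)
      rw [Finset.card_eq_sum_card_fiberwise (f := c) (t := Icc 1 t)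
        (s := (Icc 1 (t * n)).filter (fun y => c y ∈ Icc 1 t))
        (fun y hy => (Finset.mem_filter.1 hy).2)]
      have : ∀ i ∈ Icc 1 t, (((Icc 1 (t * n)).filter (fun y => c y ∈ Icc 1 t)).filter
          (fun y => c y = i)).card = n := by
        intro i hi
        have hi' := Finset.mem_Icc.1 hi
        rw [Finset.filter_filter]
        refine Eq.trans ?_ (hc i hi'.1 hi'.2)
        congr 1
        apply Finset.filter_congr
        intro y _
        constructor
        · exact fun h => h.2
        · exact fun h => ⟨h ▸ hi, h⟩
      rw [Finset.sum_congr rfl this]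
      simp
    rw [← hU] at hx
    have := Finset.mem_Icc.1 (Finset.mem_filter.1 hx).2
    omega

lemma inner_aux (A : Finset ℕ) (f : ℕ → ℝ) (hf : ∀ y, 0 ≤ f y) :
    (∑ y ∈ A, f y) ^ 6 ≤ (A.card : ℝ) ^ 5 * ∑ y ∈ A, f y ^ 6 :=
  pow_sum_le_card_mul_sum_pow (fun y _ => hf y) 5

open Finset in
lemma inner_bound (k t n : ℕ) (c : ℕ → ℕ) (hc : EquinumerousColoring t n c) (x : ℕ)
    (hx : x ∈ Icc 1 (t * n)) :
    (∑ y ∈ laterSame c (t * n) x, ((smallDivs k (y - x)).card : ℝ)) ^ 6 ≤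
      (n : ℝ) ^ 6 * t * ∑ N ∈ Icc 1 (k ^ 6), ((N.divisors.card : ℝ) ^ 6 / N) := by
  set A := laterSame c (t * n) x with hA
  have hcard : A.card ≤ n := by
    rw [← color_class t n c hc x hx]
    apply Finset.card_le_card
    intro y hy
    simp only [hA, laterSame, Finset.mem_filter] at hy ⊢
    exact ⟨hy.1, hy.2.1⟩
  have h1 : (∑ y ∈ A, ((smallDivs k (y - x)).card : ℝ)) ^ 6 ≤
      (A.card : ℝ) ^ 5 * ∑ y ∈ A, ((smallDivs k (y - x)).card : ℝ) ^ 6 :=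
    inner_aux A (fun y => ((smallDivs k (y - x)).card : ℝ)) (fun _ => Nat.cast_nonneg _)
  have h2 : ∑ y ∈ A, ((smallDivs k (y - x)).card : ℝ) ^ 6 ≤
      ∑ D ∈ Icc 1 (t * n), ((smallDivs k D).card : ℝ) ^ 6 := by
    have hinj : Set.InjOn (fun y => y - x) (A : Set ℕ) := by
      intro y hy z hz h
      simp only [hA, laterSame, Finset.mem_coe, Finset.mem_filter] at hy hz h
      omega
    rw [← Finset.sum_image (f := fun D => ((smallDivs k D).card : ℝ) ^ 6) hinj]
    apply Finset.sum_le_sum_of_subset_of_nonneg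
    · intro D hD
      obtain ⟨y, hy, rfl⟩ := Finset.mem_image.1 hD
      simp only [hA, laterSame, Finset.mem_filter, Finset.mem_Icc] at hy ⊢
      omega
    · intros
      positivity
  have h3 := smallDivs_moment k (t * n) 6
  have hcard' : (A.card : ℝ) ≤ n := by exact_mod_cast hcard
  calc _ ≤ _ := h1
    _ ≤ (n : ℝ) ^ 5 * (((t * n : ℕ) : ℝ) *
        ∑ N ∈ Icc 1 (k ^ 6), ((N.divisors.card : ℝ) ^ 6 / N)) := by
        exact mul_le_mul (pow_le_pow_left₀ (Nat.cast_nonneg _) hcard' 5) (h2.trans h3)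
          (Finset.sum_nonneg (fun _ _ => pow_nonneg (Nat.cast_nonneg _) _))
          (pow_nonneg (Nat.cast_nonneg _) _)
    _ = _ := by push_cast; ring

open Finset in
lemma exists_rainbow (k s n : ℕ) (hk : 1 ≤ k) (hs : 0 < s) (hn : 0 < n)
    (hbig : (2 * k : ℝ) ^ 7 * ∑ N ∈ Icc 1 (k ^ 6), ((N.divisors.card : ℝ) ^ 6 / N) < (s : ℝ) ^ 5)
    (c : ℕ → ℕ) (hc : EquinumerousColoring (2 * k * s) n c) :
    ∃ a d : ℕ, 1 ≤ a ∧ 1 ≤ d ∧ a + (k - 1) * d ≤ 2 * k * s * n ∧ RainbowAP k c a d := by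
  by_contra hno
  push Not at hno
  have hcount := count_APs k s n hk c hno
  set S := ∑ N ∈ Icc 1 (k ^ 6), ((N.divisors.card : ℝ) ^ 6 / N) with hS
  set M := 2 * k * s * n with hM
  have hcR : ((k * s * n) * (s * n) : ℝ) ≤ ∑ x ∈ Icc 1 M,
      (k : ℝ) * ∑ y ∈ laterSame c M x, ((smallDivs k (y - x)).card : ℝ) := by
    simp_rw [Finset.mul_sum]
    exact_mod_cast hcount
  have hkp : (0 : ℝ) < k := by exact_mod_cast hk
  have hsp : (0 : ℝ) < s := by exact_mod_cast hs
  have hnp : (0 : ℝ) < n := by exact_mod_cast hn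
  have hlt : ∀ x ∈ Icc 1 M,
      (k : ℝ) * ∑ y ∈ laterSame c M x, ((smallDivs k (y - x)).card : ℝ) < s * n / 2 := by
    intro x hx
    have hb := inner_bound k (2 * k * s) n c hc x hx
    rw [← hS] at hb
    set T := ∑ y ∈ laterSame c M x, ((smallDivs k (y - x)).card : ℝ) with hT
    have : (2 * k * T) ^ 6 < (s * n : ℝ) ^ 6 := by
      calc (2 * k * T) ^ 6 = (2 * k : ℝ) ^ 6 * T ^ 6 := by ring
        _ ≤ (2 * k : ℝ) ^ 6 * ((n : ℝ) ^ 6 * ((2 * k * s : ℕ) : ℝ) * S) := by gcongr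
        _ = (n : ℝ) ^ 6 * s * ((2 * k : ℝ) ^ 7 * S) := by push_cast; ring
        _ < (n : ℝ) ^ 6 * s * (s : ℝ) ^ 5 := by gcongr
        _ = _ := by ring
    have := lt_of_pow_lt_pow_left₀ 6 (by positivity) this
    linarith
  have hMpos : 0 < M := by positivity
  have := Finset.sum_lt_sum_of_nonempty (s := Icc 1 M) ⟨1, Finset.mem_Icc.2 ⟨le_rfl, hMpos⟩⟩ hlt
  rw [Finset.sum_const, nsmul_eq_mul, Nat.card_Icc] at this
  have e : ((M + 1 - 1 : ℕ) : ℝ) * (s * n / 2) = (k * s * n) * (s * n) := by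
    rw [Nat.add_sub_cancel, hM]; push_cast; ring
  linarith

/-- **T_k = O(k^{5/2+ε}) for all ε > 0.**  For every `ε > 0` there is a constant
`C > 0` such that for every `k ≥ 3` there is a positive integer
`t ≤ C * k^(5/2+ε)` such that every equinumerous `t`-coloring of `[t*n]`,
for every positive `n`, contains a rainbow arithmetic progression of length `k`. -/
theorem rainbow_AP_of_equinumerous_coloring_five_halves (ε : ℝ) (hε : 0 < ε) :
    ∃ C : ℝ, 0 < C ∧ ∀ k : ℕ, 3 ≤ k →
      ∃ t : ℕ, 0 < t ∧ (t : ℝ) ≤ C * (k : ℝ) ^ ((5 : ℝ) / 2 + ε) ∧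
        ∀ n : ℕ, 0 < n → ∀ c : ℕ → ℕ, EquinumerousColoring t n c →
          ∃ a d : ℕ, 1 ≤ a ∧ 1 ≤ d ∧ a + (k - 1) * d ≤ t * n ∧
            RainbowAP k c a d := by
  obtain ⟨B, hB⟩ : ∃ B : ℝ, B = 4 * 769 ^ 13 := ⟨_, rfl⟩
  have hBpos : 0 < B := by rw [hB]; norm_num
  have hB5 : 2 ^ 7 * (769 : ℝ) ^ 64 < B ^ 5 := by rw [hB]; norm_num
  refine ⟨2 * (B + 1), by positivity, ?_⟩
  intro k hk
  have hk1 : 1 ≤ k := by omega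
  have hkR : (1 : ℝ) ≤ k := by exact_mod_cast hk1
  have hk0 : (0 : ℝ) < k := by linarith
  have hr1 : (1 : ℝ) ≤ (k : ℝ) ^ ((3 : ℝ) / 2) := Real.one_le_rpow hkR (by norm_num)
  have hsle : B * (k : ℝ) ^ ((3 : ℝ) / 2) ≤ (⌈B * (k : ℝ) ^ ((3 : ℝ) / 2)⌉₊ : ℝ) := Nat.le_ceil _
  have hslt : (⌈B * (k : ℝ) ^ ((3 : ℝ) / 2)⌉₊ : ℝ) < B * (k : ℝ) ^ ((3 : ℝ) / 2) + 1 :=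
    Nat.ceil_lt_add_one (by positivity)
  have hs : 0 < ⌈B * (k : ℝ) ^ ((3 : ℝ) / 2)⌉₊ := Nat.ceil_pos.2 (by positivity)
  generalize ⌈B * (k : ℝ) ^ ((3 : ℝ) / 2)⌉₊ = s at *
  refine ⟨2 * k * s, by positivity, ?_, ?_⟩
  · have e1 : (k : ℝ) * (k : ℝ) ^ ((3 : ℝ) / 2) = (k : ℝ) ^ ((5 : ℝ) / 2) := by
      rw [← Real.rpow_one_add' hk0.le (by norm_num)]; norm_num
    have e2 : (k : ℝ) ^ ((5 : ℝ) / 2) ≤ (k : ℝ) ^ ((5 : ℝ) / 2 + ε) :=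
      Real.rpow_le_rpow_of_exponent_le hkR (by linarith)
    push_cast
    calc (2 * k * s : ℝ) ≤ 2 * k * ((B + 1) * (k : ℝ) ^ ((3 : ℝ) / 2)) := by
          gcongr
          linarith
      _ = 2 * (B + 1) * (k * (k : ℝ) ^ ((3 : ℝ) / 2)) := by ring
      _ ≤ _ := by rw [e1]; gcongr
  · intro n hn c hc
    apply exists_rainbow k s n hk1 hs hn ?_ c hc
    have e3 : ((k : ℝ) ^ ((3 : ℝ) / 2)) ^ 5 = (k : ℝ) ^ 7 * (k : ℝ) ^ ((1 : ℝ) / 2) := by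
      rw [← Real.rpow_natCast, ← Real.rpow_mul hk0.le, ← Real.rpow_natCast (k : ℝ) 7,
        ← Real.rpow_add hk0]
      norm_num
    calc _ ≤ (2 * k : ℝ) ^ 7 * (769 ^ 64 * (k : ℝ) ^ ((1 : ℝ) / 2)) := by
          gcongr
          exact moment_bound k hk1
      _ = (2 ^ 7 * 769 ^ 64) * ((k : ℝ) ^ 7 * (k : ℝ) ^ ((1 : ℝ) / 2)) := by ring
      _ < B ^ 5 * ((k : ℝ) ^ 7 * (k : ℝ) ^ ((1 : ℝ) / 2)) := by gcongr
      _ = (B * (k : ℝ) ^ ((3 : ℝ) / 2)) ^ 5 := by rw [mul_pow, e3]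
      _ ≤ _ := by gcongr
end

section
/- There exists a constant C > 0 such that for every integer k ≥ 3 there is a positive integer t with t ≤ C · k^3 having the following property: for every positive integer n, every equinumerous t-coloring of [t·n] contains a rainbow arithmetic progression of length k. (Equivalently, T_k = O(k^3).) -/
lemma color_mem {t n : ℕ} {c : ℕ → ℕ} (h : EquinumerousColoring t n c) :
    ∀ x ∈ Finset.Icc 1 (t * n), 1 ≤ c x ∧ c x ≤ t := by
  have h1 : ((Finset.Icc 1 (t * n)).filter (fun x => c x ∈ Finset.Icc 1 t)).card = t * n := by
    rw [Finset.card_eq_sum_card_fiberwise (f := c) (t := Finset.Icc 1 t)]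
    · rw [Finset.sum_congr rfl (g := fun _ => n)]
      · simp
      · intro i hi
        have hi' := Finset.mem_Icc.1 hi
        rw [Finset.filter_filter]
        refine Eq.trans ?_ (h i hi'.1 hi'.2)
        congr 1
        apply Finset.filter_congr
        intro x _
        constructor
        · exact fun hx => hx.2
        · exact fun hx => ⟨hx ▸ hi, hx⟩
    · intro x hx
      exact (Finset.mem_filter.1 hx).2
  have h2 : (Finset.Icc 1 (t * n)).filter (fun x => c x ∈ Finset.Icc 1 t)
      = Finset.Icc 1 (t * n) :=
    Finset.eq_of_subset_of_card_le (Finset.filter_subset _ _) (by rw [h1]; simp)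
  intro x hx
  rw [← h2] at hx
  exact Finset.mem_Icc.1 (Finset.mem_filter.1 hx).2

lemma mono_pairs {t n : ℕ} {c : ℕ → ℕ} (h : EquinumerousColoring t n c) :
    ((Finset.Icc 1 (t * n)).sigma
      (fun x => (Finset.Icc 1 (t * n)).filter (fun y => c y = c x))).card = t * n * n := by
  rw [Finset.card_sigma, Finset.sum_congr rfl (g := fun _ => n)]
  · simp
  · intro x hx
    exact h _ (color_mem h x hx).1 (color_mem h x hx).2

/-- **T_k = O(k^3).**  There is a constant `C > 0` such that for every `k ≥ 3`
there is a positive integer `t ≤ C * k^3` such that every equinumerous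
`t`-coloring of `[t*n]`, for every positive `n`, contains a rainbow
arithmetic progression of length `k`. -/
theorem rainbow_AP_of_equinumerous_coloring_cubed :
    ∃ C : ℝ, 0 < C ∧ ∀ k : ℕ, 3 ≤ k →
      ∃ t : ℕ, 0 < t ∧ (t : ℝ) ≤ C * (k : ℝ) ^ 3 ∧
        ∀ n : ℕ, 0 < n → ∀ c : ℕ → ℕ, EquinumerousColoring t n c →
          ∃ a d : ℕ, 1 ≤ a ∧ 1 ≤ d ∧ a + (k - 1) * d ≤ t * n ∧
            RainbowAP k c a d := by
  refine ⟨6, by norm_num, fun k hk => ⟨6 * k ^ 3, by positivity, by push_cast; exact le_rfl, ?_⟩⟩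
  intro n hn c hc
  by_contra hcon
  push Not at hcon
  set S := Finset.Icc 1 (3 * k ^ 3 * n) ×ˢ Finset.Icc 1 (3 * k ^ 2 * n) with hS
  have hbound : ∀ p ∈ S, ∀ i < k, p.1 + i * p.2 ∈ Finset.Icc 1 (6 * k ^ 3 * n) := by
    intro p hp i hi
    simp only [hS, Finset.mem_product, Finset.mem_Icc] at hp
    have : i * p.2 ≤ k * (3 * k ^ 2 * n) := Nat.mul_le_mul hi.le hp.2.2
    have e : k * (3 * k ^ 2 * n) = 3 * k ^ 3 * n := by ring
    have e2 : 6 * k ^ 3 * n = 3 * k ^ 3 * n + 3 * k ^ 3 * n := by ring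
    rw [Finset.mem_Icc]
    omega
  have hsub : S ⊆ (Finset.range k ×ˢ Finset.range k).biUnion (fun q =>
      S.filter (fun p => q.1 ≠ q.2 ∧ c (p.1 + q.1 * p.2) = c (p.1 + q.2 * p.2))) := by
    intro p hp
    have hp' := hp
    simp only [hS, Finset.mem_product, Finset.mem_Icc] at hp'
    have hb := Finset.mem_Icc.1 (hbound p hp (k - 1) (by omega))
    have hnr := hcon p.1 p.2 hp'.1.1 hp'.2.1 hb.2
    unfold RainbowAP at hnr
    push Not at hnr
    obtain ⟨i, hi, j, hj, hcij, hij⟩ := hnr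
    rw [Finset.mem_biUnion]
    exact ⟨(i, j), by simp [hi, hj], Finset.mem_filter.2 ⟨hp, hij, hcij⟩⟩
  have hcard := (Finset.card_le_card hsub).trans
    (Finset.card_biUnion_le_card_mul _ _ (6 * k ^ 3 * n * n) ?_)
  · simp only [hS, Finset.card_product, Nat.card_Icc, Finset.card_range,
      Nat.add_sub_cancel] at hcard
    have hpos : 0 < k ^ 5 * n ^ 2 := by positivity
    nlinarith
  · rintro ⟨i, j⟩ hq
    simp only [Finset.mem_product, Finset.mem_range] at hq
    rw [← mono_pairs hc]
    apply Finset.card_le_card_of_injOn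
      (fun p : ℕ × ℕ => (⟨p.1 + i * p.2, p.1 + j * p.2⟩ : (_ : ℕ) × ℕ))
    · intro p hp
      have hp := Finset.mem_filter.1 hp
      simp only [Finset.coe_sigma, Set.mem_sigma_iff, Finset.mem_coe, Finset.mem_filter]
      exact ⟨hbound p hp.1 i hq.1, hbound p hp.1 j hq.2, hp.2.2.symm⟩
    · rintro ⟨a, d⟩ hp ⟨a', d'⟩ _ heq
      have hij : i ≠ j := (Finset.mem_filter.1 hp).2.1
      simp only [Sigma.mk.injEq, heq_eq_eq] at heq
      obtain ⟨h1, h2⟩ := heq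
      have hd : d = d' := by
        zify at h1 h2 hij ⊢
        have h3 : ((i : ℤ) - j) * ((d : ℤ) - d') = 0 := by linarith
        rcases mul_eq_zero.1 h3 with h | h
        · exact absurd (sub_eq_zero.1 h) hij
        · linarith
      subst hd
      have : a = a' := by omega
      rw [this]
end

section
/- Let k ≥ 3 and write m = a(k−1) + b with a ≥ 1 and 0 ≤ b < k−1. Then the number of arithmetic progressions of length k contained in [m] equals b·C(a+1, 2) + (k−b−1)·C(a, 2), where C(x, 2) = x(x−1)/2 denotes a binomial coefficient. -/
/-- The set of arithmetic progressions of length `k` contained in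
`[m] = {1, ..., m}`, encoded as pairs `(a₀, d)` of first term and common
difference, with `a₀ ≥ 1`, `d ≥ 1`, and last term `a₀ + (k-1)d ≤ m`. -/
def APSet (m k : ℕ) : Set (ℕ × ℕ) :=
  {p | 1 ≤ p.1 ∧ 1 ≤ p.2 ∧ p.1 + (k - 1) * p.2 ≤ m}

/-- For `k ≥ 3` and `m = a(k-1) + b` with `a ≥ 1` and `0 ≤ b < k-1`, the
number of arithmetic progressions of length `k` contained in `[m]` equals
`b * C(a+1, 2) + (k-b-1) * C(a, 2)`. -/
theorem card_APSet (k m a b : ℕ) (hk : 3 ≤ k) (ha : 1 ≤ a) (hb : b < k - 1)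
    (hm : m = a * (k - 1) + b) :
    (APSet m k).ncard = b * (a + 1).choose 2 + (k - b - 1) * a.choose 2 := by
  obtain ⟨n, rfl⟩ : ∃ n, k = n + 1 := ⟨k - 1, by omega⟩
  simp only [Nat.add_sub_cancel] at hb hm
  obtain ⟨c, rfl⟩ : ∃ c, n = b + c := ⟨n - b, by omega⟩
  have hset : APSet m (b + c + 1) =
      (((Finset.range a).sigma (fun j => Finset.range ((b + c) * j + b))).image
        (fun p : (_ : ℕ) × ℕ => ((p.2 + 1, a - p.1) : ℕ × ℕ)) : Finset (ℕ × ℕ)) := by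
    ext ⟨x, d⟩
    simp only [APSet, Set.mem_setOf_eq, Nat.add_sub_cancel, Finset.coe_image, Set.mem_image,
      Finset.mem_coe, Finset.mem_sigma, Finset.mem_range, Prod.mk.injEq]
    constructor
    · rintro ⟨h1, h2, h3⟩
      have hda : d ≤ a := by
        by_contra hlt
        have : (b + c) * (a + 1) ≤ (b + c) * d := Nat.mul_le_mul_left _ (by omega)
        have e : (b + c) * (a + 1) = a * (b + c) + (b + c) := by ring
        omega
      obtain ⟨j, rfl⟩ := Nat.exists_eq_add_of_le hda
      refine ⟨⟨j, x - 1⟩, ⟨by simp only; omega, ?_⟩, by simp only; omega, by simp only; omega⟩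
      have e : (d + j) * (b + c) = (b + c) * d + (b + c) * j := by ring
      simp only
      omega
    · rintro ⟨⟨j, i⟩, ⟨h1, h2⟩, h3, h4⟩
      simp only at h1 h2 h3 h4
      obtain ⟨e, rfl⟩ := Nat.exists_eq_add_of_le h1.le
      obtain rfl : e = d := by omega
      have e2 : (j + e) * (b + c) = (b + c) * e + (b + c) * j := by ring
      exact ⟨by omega, by omega, by omega⟩
  rw [hset, Set.ncard_coe_finset, Finset.card_image_of_injOn, Finset.card_sigma]
  · have hc : b + c + 1 - b - 1 = c := by omega
    rw [hc]
    simp only [Finset.card_range]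
    clear hset hm ha
    induction a with
    | zero => simp
    | succ a ih =>
      rw [Finset.sum_range_succ, ih]
      have e1 : (a + 1 + 1).choose 2 = (a + 1) + (a + 1).choose 2 := by
        rw [Nat.choose_succ_succ' (a + 1) 1, Nat.choose_one_right]
      have e2 : (a + 1).choose 2 = a + a.choose 2 := by
        rw [Nat.choose_succ_succ' a 1, Nat.choose_one_right]
      rw [e1, e2]
      ring
  · rintro ⟨j, i⟩ h ⟨j', i'⟩ h' heq
    simp only [Finset.mem_coe, Finset.mem_sigma, Finset.mem_range, Prod.mk.injEq] at h h' heq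
    obtain rfl : j = j' := by omega
    obtain rfl : i = i' := by omega
    rfl
end

section
/- For every ε > 0 there exists a constant C > 0 such that for all integers k ≥ 3, all positive integers n with n ≤ k, and every integer t with C · k^(2+ε) ≤ t, every equinumerous t-coloring of [t·n] contains a rainbow arithmetic progression of length k. -/
open Finset in
/-- The divisor bound. -/
theorem divisor_bound (δ : ℝ) (hδ : 0 < δ) :
    ∃ C : ℝ, 0 < C ∧ ∀ n : ℕ, n ≠ 0 → ((n.divisors.card : ℕ) : ℝ) ≤ C * (n : ℝ) ^ δ := by
  obtain ⟨P, hP⟩ := exists_nat_ge ((2 : ℝ) ^ (1 / δ))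
  have hlog : 0 < Real.log 2 := Real.log_pos (by norm_num)
  set K : ℝ := 1 + 1 / (δ * Real.log 2) with hK
  have hK1 : 1 ≤ K := by
    have : 0 < 1 / (δ * Real.log 2) := by positivity
    linarith
  have key1 : ∀ e : ℕ, ((e : ℝ) + 1) ≤ K * ((2 : ℝ) ^ e) ^ δ := by
    intro e
    have h1 : ((2 : ℝ) ^ e) ^ δ = Real.exp (δ * Real.log 2 * e) := by
      rw [Real.rpow_def_of_pos (by positivity), Real.log_pow]
      congr 1; ring
    have h2 := Real.add_one_le_exp (δ * Real.log 2 * e)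
    have h0 : 0 < δ * Real.log 2 := by positivity
    have h3 : (e : ℝ) + 1 ≤ K * (δ * Real.log 2 * e + 1) := by
      have : K * (δ * Real.log 2 * e + 1)
          = δ * Real.log 2 * e + 1 + e + 1 / (δ * Real.log 2) := by
        rw [hK]; field_simp; ring
      rw [this]
      have : 0 ≤ δ * Real.log 2 * e := by positivity
      have : 0 < 1 / (δ * Real.log 2) := by positivity
      linarith
    rw [h1]
    exact h3.trans (mul_le_mul_of_nonneg_left h2 (by linarith))
  have key2 : ∀ p e : ℕ, 2 ≤ p →
      ((e : ℝ) + 1) ≤ (if p < P then K else 1) * ((p : ℝ) ^ e) ^ δ := by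
    intro p e hp
    have hp' : (2 : ℝ) ≤ p := by exact_mod_cast hp
    split_ifs with h
    · refine (key1 e).trans ?_
      have : ((2 : ℝ) ^ e) ^ δ ≤ ((p : ℝ) ^ e) ^ δ := by gcongr
      gcongr
    · have hPp : (2 : ℝ) ^ (1 / δ) ≤ p := hP.trans (by exact_mod_cast not_lt.mp h)
      have h2 : (2 : ℝ) ≤ (p : ℝ) ^ δ := by
        calc (2 : ℝ) = ((2 : ℝ) ^ (1 / δ)) ^ δ := by
              rw [← Real.rpow_mul (by norm_num)]; field_simp; simp
          _ ≤ _ := by gcongr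
      have h3 : ((p : ℝ) ^ e) ^ δ = ((p : ℝ) ^ δ) ^ e := by
        rw [← Real.rpow_natCast, ← Real.rpow_mul (by positivity), mul_comm,
          Real.rpow_mul (by positivity), Real.rpow_natCast]
      have h4 : ((e : ℝ) + 1) ≤ 2 ^ e := by
        have := Nat.lt_two_pow_self (n := e)
        exact_mod_cast this
      rw [h3, one_mul]
      exact h4.trans (by gcongr)
  refine ⟨K ^ P, by positivity, fun n hn => ?_⟩
  have hprod : (n : ℝ) ^ δ = ∏ p ∈ n.primeFactors, ((p : ℝ) ^ (n.factorization p)) ^ δ := by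
    rw [Real.finsetProd_rpow _ _ (fun i _ => by positivity)]
    congr 1
    conv_lhs => rw [← Nat.prod_factorization_pow_eq_self hn]
    simp [Finsupp.prod]
  rw [Nat.card_divisors hn, hprod]
  push_cast
  calc ∏ p ∈ n.primeFactors, ((n.factorization p : ℝ) + 1)
      ≤ ∏ p ∈ n.primeFactors, ((if p < P then K else 1) * ((p : ℝ) ^ (n.factorization p)) ^ δ) := by
        apply Finset.prod_le_prod
        · intros; positivity
        · intro p hp
          exact key2 p _ (Nat.prime_of_mem_primeFactors hp).two_le
    _ = (∏ p ∈ n.primeFactors, (if p < P then K else 1)) *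
          ∏ p ∈ n.primeFactors, ((p : ℝ) ^ (n.factorization p)) ^ δ := Finset.prod_mul_distrib
    _ ≤ _ := by
        apply mul_le_mul_of_nonneg_right _ (Finset.prod_nonneg fun i _ => by positivity)
        rw [← Finset.prod_filter, Finset.prod_const]
        apply pow_le_pow_right₀ hK1
        calc _ ≤ (Finset.range P).card := Finset.card_le_card (by
                intro x hx; simp at hx ⊢; exact hx.2)
          _ = P := by simp

open Finset in
/-- In an equinumerous coloring every point has a color in range, so its class has `n` elements. -/
theorem class_card {t n : ℕ} {c : ℕ → ℕ} (hc : EquinumerousColoring t n c) {x : ℕ}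
    (hx : x ∈ Icc 1 (t * n)) : ((Icc 1 (t * n)).filter (fun y => c y = c x)).card = n := by
  have h1 : ((Icc 1 (t * n)).filter (fun y => c y ∈ Icc 1 t)).card = t * n := by
    rw [Finset.card_eq_sum_card_fiberwise (f := c) (t := Icc 1 t)
      (by intro y hy; simpa using (Finset.mem_filter.mp hy).2)]
    rw [Finset.sum_congr rfl (g := fun _ => n)]
    · simp
    · intro i hi
      have hi' := Finset.mem_Icc.mp hi
      refine Eq.trans ?_ (hc i hi'.1 hi'.2)
      rw [Finset.filter_filter]
      congr 1
      apply Finset.filter_congr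
      intro y _
      constructor
      · exact fun h => h.2
      · rintro rfl; exact ⟨hi, rfl⟩
  have h2 : (Icc 1 (t * n)).filter (fun y => c y ∈ Icc 1 t) = Icc 1 (t * n) :=
    Finset.eq_of_subset_of_card_le (Finset.filter_subset _ _) (by rw [h1]; simp)
  rw [← h2] at hx
  have h3 := Finset.mem_Icc.mp (Finset.mem_filter.mp hx).2
  exact hc _ h3.1 h3.2

open Finset in
/-- Counting non-rainbow progressions. -/
theorem count_bad {t n k M : ℕ} {c : ℕ → ℕ} (hk : 3 ≤ k) (hc : EquinumerousColoring t n c)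
    (hM : ∀ D, 1 ≤ D → D < t * n → ((Icc 1 (k - 1)).filter (fun m => m ∣ D)).card ≤ M)
    (hno : ∀ a d : ℕ, 1 ≤ a → 1 ≤ d → a + (k - 1) * d ≤ t * n → ¬ RainbowAP k c a d) :
    (t * n / 2) * (t * n / (2 * k)) ≤ (t * n) * (n * (k * M)) := by
  set N := t * n with hN
  let T : Finset ((_ : ℕ) × (_ : ℕ) × (ℕ × ℕ)) :=
    (Icc 1 N).sigma (fun x => ((Icc 1 N).filter (fun y => c y = c x ∧ x < y)).sigma
      (fun y => (range k) ×ˢ ((Icc 1 (k - 1)).filter (fun m => m ∣ y - x))))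
  have hT : T.card ≤ N * (n * (k * M)) := by
    rw [Finset.card_sigma]
    refine (Finset.sum_le_card_nsmul _ _ (n * (k * M)) ?_).trans (by simp)
    intro x hx
    rw [Finset.card_sigma]
    refine (Finset.sum_le_card_nsmul _ _ (k * M) ?_).trans ?_
    · intro y hy
      rw [Finset.card_product, Finset.card_range]
      apply Nat.mul_le_mul_left
      simp only [Finset.mem_filter, Finset.mem_Icc] at hx hy
      exact hM _ (by omega) (by omega)
    · rw [smul_eq_mul]
      apply Nat.mul_le_mul_right
      calc _ ≤ ((Icc 1 N).filter (fun y => c y = c x)).card := Finset.card_le_card (by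
              intro y hy
              simp only [Finset.mem_filter] at hy ⊢
              exact ⟨hy.1, hy.2.1⟩)
        _ = n := class_card hc hx
  refine le_trans ?_ hT
  let g : ((_ : ℕ) × (_ : ℕ) × (ℕ × ℕ)) → ℕ × ℕ := fun q =>
    (q.1 - q.2.2.1 * ((q.2.1 - q.1) / q.2.2.2), (q.2.1 - q.1) / q.2.2.2)
  have hsub : (Icc 1 (N / 2)) ×ˢ (Icc 1 (N / (2 * k))) ⊆ T.image g := by
    rintro ⟨a, d⟩ had
    simp only [Finset.mem_product, Finset.mem_Icc] at had
    obtain ⟨⟨ha1, ha2⟩, hd1, hd2⟩ := had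
    have hkd : 2 * (k * d) ≤ N := by
      have := (Nat.le_div_iff_mul_le (by omega)).mp hd2
      linarith
    have hfit : ∀ i < k, a + i * d ≤ N := by
      intro i hi
      have : i * d ≤ k * d := Nat.mul_le_mul_right _ hi.le
      omega
    have hbad := hno a d ha1 hd1 (hfit _ (by omega))
    have : ∃ i j, i < j ∧ j < k ∧ c (a + j * d) = c (a + i * d) := by
      unfold RainbowAP at hbad
      push Not at hbad
      obtain ⟨i, hi, j, hj, h, hne⟩ := hbad
      rcases lt_or_gt_of_ne hne with h' | h'
      · exact ⟨i, j, h', hj, h.symm⟩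
      · exact ⟨j, i, h', hi, h⟩
    obtain ⟨i, j, hij, hj, hcc⟩ := this
    obtain ⟨m, rfl⟩ := Nat.exists_eq_add_of_lt hij
    have hdiff : a + (i + m + 1) * d - (a + i * d) = (m + 1) * d := by
      have : a + (i + m + 1) * d = (a + i * d) + (m + 1) * d := by ring
      omega
    have hpos : 0 < (m + 1) * d := by positivity
    have hdiv : (m + 1) * d / (m + 1) = d := Nat.mul_div_cancel_left _ (by omega)
    refine Finset.mem_image.mpr ⟨⟨a + i * d, a + (i + m + 1) * d, (i, m + 1)⟩, ?_, ?_⟩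
    · simp only [T, Finset.mem_sigma, Finset.mem_filter, Finset.mem_Icc, Finset.mem_product,
        Finset.mem_range, hdiff]
      have h1 := hfit i (by omega)
      have h2 := hfit _ hj
      refine ⟨⟨by omega, h1⟩, ⟨⟨by omega, h2⟩, hcc, by omega⟩, by omega, ⟨by omega, by omega⟩,
        Dvd.intro _ rfl⟩
    · simp only [g, hdiff, hdiv, Nat.add_sub_cancel]
  calc (N / 2) * (N / (2 * k)) = ((Icc 1 (N / 2)) ×ˢ (Icc 1 (N / (2 * k)))).card := by simp
    _ ≤ (T.image g).card := Finset.card_le_card hsub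
    _ ≤ T.card := Finset.card_image_le

/-- The counting bound in clean form. -/
theorem exists_rainbow_s10 {t n k M : ℕ} {c : ℕ → ℕ} (hk : 3 ≤ k) (hn : 0 < n)
    (hc : EquinumerousColoring t n c)
    (hM : ∀ D, 1 ≤ D → D < t * n →
      ((Finset.Icc 1 (k - 1)).filter (fun m => m ∣ D)).card ≤ M)
    (ht : 16 * k ^ 2 * M < t) (htk : 2 * k ≤ t) :
    ∃ a d : ℕ, 1 ≤ a ∧ 1 ≤ d ∧ a + (k - 1) * d ≤ t * n ∧ RainbowAP k c a d := by
  by_contra hcon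
  push Not at hcon
  have h := count_bad hk hc hM hcon
  have hNt : t ≤ t * n := Nat.le_mul_of_pos_right _ hn
  have h1 : t * n ≤ 4 * (t * n / 2) := by omega
  have h2 : t * n ≤ 4 * k * (t * n / (2 * k)) := by
    have ha := Nat.div_add_mod (t * n) (2 * k)
    have hb := Nat.mod_lt (t * n) (show 0 < 2 * k by omega)
    have hq : 1 ≤ t * n / (2 * k) := (Nat.one_le_div_iff (by omega)).mpr (by omega)
    have : 2 * k * 1 ≤ 2 * k * (t * n / (2 * k)) := Nat.mul_le_mul_left _ hq
    nlinarith
  have h3 : (t * n) * (t * n) ≤ (t * n) * (n * (16 * k ^ 2 * M)) := by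
    calc (t * n) * (t * n) ≤ (4 * (t * n / 2)) * (4 * k * (t * n / (2 * k))) :=
          Nat.mul_le_mul h1 h2
      _ = 16 * k * ((t * n / 2) * (t * n / (2 * k))) := by ring
      _ ≤ 16 * k * ((t * n) * (n * (k * M))) := Nat.mul_le_mul_left _ h
      _ = _ := by ring
  have h4 := Nat.le_of_mul_le_mul_left h3 (by omega)
  have h5 : n * t ≤ n * (16 * k ^ 2 * M) := by linarith
  have h6 := Nat.le_of_mul_le_mul_left h5 hn
  omega

/-- For every `ε > 0` there is a constant `C > 0` such that for all `k ≥ 3`,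
all positive `n ≤ k`, and every `t` with `C * k^(2+ε) ≤ t`, every
equinumerous `t`-coloring of `[t*n]` contains a rainbow arithmetic
progression of length `k`. -/
theorem rainbow_AP_small_n (ε : ℝ) (hε : 0 < ε) :
    ∃ C : ℝ, 0 < C ∧ ∀ k : ℕ, 3 ≤ k → ∀ n : ℕ, 0 < n → n ≤ k →
      ∀ t : ℕ, C * (k : ℝ) ^ ((2 : ℝ) + ε) ≤ (t : ℝ) →
        ∀ c : ℕ → ℕ, EquinumerousColoring t n c →
          ∃ a d : ℕ, 1 ≤ a ∧ 1 ≤ d ∧ a + (k - 1) * d ≤ t * n ∧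
            RainbowAP k c a d := by
  obtain ⟨C₁, hC₁, hdiv⟩ := divisor_bound (ε / 4) (by positivity)
  set B : ℝ := C₁ * (16 : ℝ) ^ (ε / 4) with hB
  have hB0 : 0 < B := by positivity
  refine ⟨16 * B + 2, by positivity, ?_⟩
  intro k hk n hn hnk t ht c hc
  have hk3 : (3 : ℝ) ≤ k := by exact_mod_cast hk
  have hkε : 1 ≤ (k : ℝ) ^ ε := Real.one_le_rpow (by linarith) hε.le
  have hsplit : (k : ℝ) ^ ((2 : ℝ) + ε) = (k : ℝ) ^ 2 * (k : ℝ) ^ ε := by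
    rw [Real.rpow_add (by linarith)]; norm_num
  rw [hsplit] at ht
  have hk2 : (0 : ℝ) < (k : ℝ) ^ 2 := by positivity
  have h2k : (2 : ℝ) * k ^ 2 ≤ 2 * (k ^ 2 * (k : ℝ) ^ ε) := by nlinarith
  have hBpos : 0 ≤ 16 * B * ((k : ℝ) ^ 2 * (k : ℝ) ^ ε) := by positivity
  have htk : 2 * k ≤ t := by
    have : (2 * k : ℝ) ≤ t := by nlinarith
    exact_mod_cast this
  by_cases hbig : 16 * k ^ 3 < t
  · refine exists_rainbow_s10 (M := k) hk hn hc ?_ (by linarith [pow_succ k 2]) htk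
    intro D _ _
    calc _ ≤ (Finset.Icc 1 (k - 1)).card := Finset.card_filter_le _ _
      _ ≤ k := by simp
  · push Not at hbig
    refine exists_rainbow_s10 (M := ⌊B * (k : ℝ) ^ ε⌋₊) hk hn hc ?_ ?_ htk
    · intro D hD hDN
      apply Nat.le_floor
      have hDk : D ≤ 16 * k ^ 4 := by
        calc D ≤ t * n := hDN.le
          _ ≤ (16 * k ^ 3) * k := Nat.mul_le_mul hbig hnk
          _ = _ := by ring
      have hDk' : (D : ℝ) ≤ 16 * (k : ℝ) ^ 4 := by exact_mod_cast hDk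
      have hsub : ((Finset.Icc 1 (k - 1)).filter (fun m => m ∣ D)).card ≤ D.divisors.card := by
        apply Finset.card_le_card
        intro m hm
        exact Nat.mem_divisors.mpr ⟨(Finset.mem_filter.mp hm).2, by omega⟩
      calc ((((Finset.Icc 1 (k - 1)).filter (fun m => m ∣ D)).card : ℕ) : ℝ)
          ≤ (D.divisors.card : ℝ) := by exact_mod_cast hsub
        _ ≤ C₁ * (D : ℝ) ^ (ε / 4) := hdiv D (by omega)
        _ ≤ C₁ * (16 * (k : ℝ) ^ 4) ^ (ε / 4) := by gcongr
        _ = B * (k : ℝ) ^ ε := by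
            rw [Real.mul_rpow (by norm_num) (by positivity), hB, ← Real.rpow_natCast (k : ℝ) 4,
              ← Real.rpow_mul (by positivity)]
            have : ((4 : ℕ) : ℝ) * (ε / 4) = ε := by push_cast; ring
            rw [this]; ring
    · have hfl : ((⌊B * (k : ℝ) ^ ε⌋₊ : ℕ) : ℝ) ≤ B * (k : ℝ) ^ ε := Nat.floor_le (by positivity)
      have : (16 * (k : ℝ) ^ 2 * ((⌊B * (k : ℝ) ^ ε⌋₊ : ℕ) : ℝ)) < t := by
        have := mul_le_mul_of_nonneg_left hfl (show 0 ≤ 16 * (k : ℝ) ^ 2 by positivity)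
        nlinarith
      exact_mod_cast this
end
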